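/- Fix integers d ≥ 3 and r ≥ 1 and real numbers p with 1/2 < p ≤ 1 and q with 1/d < q ≤ 1. Let (B_1, D_1), …, (B_r, D_r) be i.i.d. pairs in which B_i and D_i are independent, B_i is Bernoulli with P(B_i = 1) = p, and D_i takes values in {0, 1, …, d-1} with P(D_i = 0) = q and P(D_i = j) = (1-q)/(d-1) for every j ≠ 0. For each category c ∈ {0, …, d-1} let N_c = #{ i : B_i = 1 and D_i = c }. Then P( N_0 > N_c for every c ≠ 0 ) ≥ 1 - exp( - r·p·(d-1)·(q - 1/d)^2 / (3d) ). -/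

import Mathlib

open MeasureTheory

lemma le_one_sub_sq_div_three_pow_mul {δ f : ℝ} (k : ℕ) (h0 : 0 ≤ δ) (h1 : δ ≤ 1)
    (hlin : f ≤ 1 - δ) (hsq : f ^ 2 ≤ (1 - δ) * (1 - δ ^ 2) ^ k) :
    f ≤ (1 - δ ^ 2 / 3) ^ (k + 1) * (1 - 2 * δ / 3 + δ ^ 2 / 3) := by
  have hδ2 : δ ^ 2 ≤ 1 := by nlinarith
  have hA : 0 < 1 - δ ^ 2 / 3 := by linarith
  have hC : 0 < 1 - 2 * δ / 3 + δ ^ 2 / 3 := by nlinarith [sq_nonneg (δ - 1)]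
  rcases le_total (k * δ) 1 with hk | hk
  · have hbern : 1 - δ / 3 ≤ (1 - δ ^ 2 / 3) ^ k := by
      have := one_add_mul_le_pow (a := -(δ ^ 2 / 3)) (by linarith) k
      have h2 : (k * δ) * δ ≤ 1 * δ := by gcongr
      rw [← sub_eq_add_neg] at this
      nlinarith
    have hpoly : 1 - δ ≤
        (1 - δ / 3) * (1 - δ ^ 2 / 3) * (1 - 2 * δ / 3 + δ ^ 2 / 3) := by
      have : (1 - δ / 3) * (1 - δ ^ 2 / 3) * (1 - 2 * δ / 3 + δ ^ 2 / 3) - (1 - δ) =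
        δ ^ 2 * (2 / 9 + δ * (2 / 9) - δ ^ 2 * (5 / 27) + δ ^ 3 / 27) := by ring
      have h3 : 0 ≤ δ ^ 3 := by positivity
      nlinarith [mul_nonneg (sq_nonneg δ) (show 0 ≤
        2 / 9 + δ * (2 / 9) - δ ^ 2 * (5 / 27) + δ ^ 3 / 27 by nlinarith)]
    calc f ≤ _ := hlin.trans hpoly
      _ ≤ (1 - δ ^ 2 / 3) ^ k * (1 - δ ^ 2 / 3) * (1 - 2 * δ / 3 + δ ^ 2 / 3) := by gcongr
      _ = _ := by ring
  · refine le_of_sq_le_sq ?_ (by positivity)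
    have hstep : (1 - δ ^ 2) ^ k ≤ (1 - δ ^ 2 / 3) ^ (3 * k) := by
      rw [pow_mul]
      refine pow_le_pow_left₀ (by linarith) ?_ k
      nlinarith [sq_nonneg (δ ^ 2), mul_nonneg (sq_nonneg (δ ^ 2)) (sub_nonneg.2 hδ2)]
    have hbern : (1 - δ ^ 2 / 3) ^ k * (1 + δ / 3) ≤ 1 := by
      have hb := one_add_mul_le_pow (a := δ ^ 2 / 3) (by nlinarith [sq_nonneg δ]) k
      have h2 : 1 * δ ≤ (k * δ) * δ := by gcongr
      calc (1 - δ ^ 2 / 3) ^ k * (1 + δ / 3)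
          ≤ (1 - δ ^ 2 / 3) ^ k * (1 + δ ^ 2 / 3) ^ k := by
            gcongr; nlinarith
        _ = (1 - (δ ^ 2 / 3) ^ 2) ^ k := by rw [← mul_pow]; ring
        _ ≤ 1 := pow_le_one₀ (by nlinarith [sq_nonneg δ]) (by nlinarith [sq_nonneg (δ ^ 2)])
    have hpoly : 1 - δ ≤
        (1 + δ / 3) * ((1 - δ ^ 2 / 3) * (1 - 2 * δ / 3 + δ ^ 2 / 3)) ^ 2 := by
      have hfac : (1 + δ / 3) * ((1 - δ ^ 2 / 3) * (1 - 2 * δ / 3 + δ ^ 2 / 3)) ^ 2 - (1 - δ) =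
          δ ^ 3 * (144 - 90 * δ - 6 * δ ^ 2 + 24 * δ ^ 3 - 8 * δ ^ 4 - δ ^ 5 + δ ^ 6) / 243 := by
        ring
      have h3 : 0 ≤ δ ^ 3 := by positivity
      have h4 : δ ^ 4 ≤ 1 := pow_le_one₀ h0 h1
      have h5 : δ ^ 5 ≤ 1 := pow_le_one₀ h0 h1
      have h6 : 0 ≤ δ ^ 6 := by positivity
      have hpos := mul_nonneg h3 (show 0 ≤
        144 - 90 * δ - 6 * δ ^ 2 + 24 * δ ^ 3 - 8 * δ ^ 4 - δ ^ 5 + δ ^ 6 by linarith)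
      linarith
    calc f ^ 2 ≤ (1 - δ) * (1 - δ ^ 2 / 3) ^ (3 * k) := hsq.trans (by gcongr)
      _ ≤ ((1 + δ / 3) * ((1 - δ ^ 2 / 3) * (1 - 2 * δ / 3 + δ ^ 2 / 3)) ^ 2) *
          (1 - δ ^ 2 / 3) ^ (3 * k) := by gcongr
      _ = ((1 - δ ^ 2 / 3) ^ k * (1 + δ / 3)) *
          ((1 - δ ^ 2 / 3) ^ (k + 1) * (1 - 2 * δ / 3 + δ ^ 2 / 3)) ^ 2 := by ring
      _ ≤ _ := mul_le_of_le_one_left (by positivity) hbern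

/-- Number of occurrences of the letter `c` in the word `ω`. -/
def letterCount {α : Type*} [DecidableEq α] {n : ℕ} (ω : Fin n → α) (c : α) : ℕ :=
  (Finset.univ.filter fun i => ω i = c).card

/-- Product weight of a word whose letters `j` weigh `x` and whose other letters weigh `z`. -/
def wordWeight {α : Type*} [DecidableEq α] {n : ℕ} (x z : ℝ) (j : α) (ω : Fin n → α) : ℝ :=
  ∏ i, if ω i = j then x else z

lemma sum_words_insertNth {α : Type*} [Fintype α] {n : ℕ} (i : Fin (n + 1))
    (f : (Fin (n + 1) → α) → ℝ) :
    ∑ ω, f ω = ∑ a, ∑ ω : Fin n → α, f (i.insertNth a ω) := by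
  rw [← (Fin.insertNthEquiv (fun _ => α) i).sum_comp, Fintype.sum_prod_type]
  rfl

section

variable {α : Type*} [DecidableEq α] {n : ℕ} {x z : ℝ}

lemma letterCount_insertNth (i : Fin (n + 1)) (a : α) (ω : Fin n → α) (c : α) :
    letterCount (i.insertNth a ω : Fin (n + 1) → α) c =
      (if a = c then 1 else 0) + letterCount ω c := by
  simp only [letterCount, Finset.card_filter]
  rw [Fin.sum_univ_succAbove _ i]
  simp

lemma wordWeight_insertNth (i : Fin (n + 1)) (a j : α) (ω : Fin n → α) :
    wordWeight x z j (i.insertNth a ω : Fin (n + 1) → α) =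
      (if a = j then x else z) * wordWeight x z j ω := by
  rw [wordWeight, Fin.prod_univ_succAbove _ i]
  simp [wordWeight]

lemma wordWeight_nonneg (hx : 0 ≤ x) (hz : 0 ≤ z) (j : α) (ω : Fin n → α) :
    0 ≤ wordWeight x z j ω :=
  Finset.prod_nonneg fun i _ => by split_ifs <;> assumption

lemma wordWeight_eq (j : α) (ω : Fin n → α) :
    wordWeight x z j ω = x ^ letterCount ω j * z ^ (n - letterCount ω j) := by
  rw [wordWeight, Finset.prod_ite, Finset.prod_const, Finset.prod_const, letterCount]
  congr 2
  have := Finset.card_filter_add_card_filter_not (s := (Finset.univ : Finset (Fin n)))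
    (fun i => ω i = j)
  simp at this
  omega

lemma wordWeight_le_wordWeight (hz : 0 ≤ z) (hzx : z ≤ x) {i j : α} {ω : Fin n → α}
    (h : letterCount ω i ≤ letterCount ω j) : wordWeight x z i ω ≤ wordWeight x z j ω := by
  have hn : letterCount ω j ≤ n := by
    simpa [letterCount] using
      Finset.card_filter_le (Finset.univ : Finset (Fin n)) (fun k => ω k = j)
  have hx := hz.trans hzx
  rw [wordWeight_eq, wordWeight_eq,
    show n - letterCount ω i =
      (letterCount ω j - letterCount ω i) + (n - letterCount ω j) by omega,
    pow_add, ← mul_assoc]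
  have : x ^ letterCount ω j =
      x ^ letterCount ω i * x ^ (letterCount ω j - letterCount ω i) := by
    rw [← pow_add]; congr 1; omega
  rw [this]
  gcongr

lemma hasDerivAt_wordWeight (j : α) (ω : Fin (n + 1) → α) :
    HasDerivAt (fun x => wordWeight x z j ω)
      (∑ i, if ω i = j then wordWeight x z j (i.removeNth ω) else 0) x := by
  have h : ∀ i ∈ (Finset.univ : Finset (Fin (n + 1))),
      HasDerivAt (fun x => if ω i = j then x else z) (if ω i = j then 1 else 0) x := by
    intro i _
    split_ifs
    exacts [hasDerivAt_id x, hasDerivAt_const x z]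
  refine (HasDerivAt.fun_finsetProd h).congr_deriv (Finset.sum_congr rfl fun i _ => ?_)
  split_ifs with hi
  · rw [smul_eq_mul, mul_one, Fin.univ_succAbove n i, Finset.erase_cons, Finset.prod_map]
    rfl
  · simp

/-- Deleting one occurrence of `j` turns a strict plurality of `j` into a weak one. -/
lemma plurality_insertNth_iff (i : Fin (n + 1)) (j : α) (ω : Fin n → α) :
    (∀ c, c ≠ j → letterCount (i.insertNth j ω : Fin (n + 1) → α) c <
      letterCount (i.insertNth j ω : Fin (n + 1) → α) j) ↔
    ¬ ∃ c, letterCount ω j < letterCount ω c := by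
  simp only [letterCount_insertNth, if_true]
  push Not
  refine forall_congr' fun c => ?_
  rcases eq_or_ne c j with rfl | hc
  · simp
  · simp only [hc, hc.symm, ne_eq, not_false_eq_true, if_false, forall_const]
    omega

/-- Number of rounds in which an answer is given and designates `c`. -/
def answeredCount {r : ℕ} (ω : Fin r → Bool × α) (c : α) : ℕ :=
  (Finset.univ.filter fun i => (ω i).1 = true ∧ (ω i).2 = c).card

lemma answeredCount_insertNth {r : ℕ} (i : Fin (r + 1)) (a : Bool × α) (ω : Fin r → Bool × α) :
    answeredCount (i.insertNth a ω : Fin (r + 1) → Bool × α) =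
      (fun c => (if a.1 = true ∧ a.2 = c then 1 else 0) + answeredCount ω c) := by
  funext c
  simp only [answeredCount, Finset.card_filter]
  rw [Fin.sum_univ_succAbove _ i]
  simp

variable [Fintype α]

open Classical in
/-- Total weight of the words in which some letter is strictly more frequent than `j`. -/
noncomputable def beatenWeight (n : ℕ) (x z : ℝ) (j : α) : ℝ :=
  ∑ ω : Fin n → α, if ∃ c, letterCount ω j < letterCount ω c then wordWeight x z j ω else 0

open Classical in
/-- Total weight of the words in which `j` is not the strictly most frequent letter. -/
noncomputable def nonPluralityWeight (n : ℕ) (x z : ℝ) (j : α) : ℝ :=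
  ∑ ω : Fin n → α,
    if ∀ c, c ≠ j → letterCount ω c < letterCount ω j then 0 else wordWeight x z j ω

lemma beatenWeight_nonneg (hx : 0 ≤ x) (hz : 0 ≤ z) (j : α) : 0 ≤ beatenWeight n x z j :=
  Finset.sum_nonneg fun ω _ => by
    split_ifs
    exacts [wordWeight_nonneg hx hz j ω, le_rfl]

lemma beatenWeight_eq (i j : α) : beatenWeight n x z i = beatenWeight n x z j := by
  classical
  let σ := Equiv.swap i j
  have hσ : ∀ (ω : Fin n → α) c, letterCount (σ ∘ ω) c = letterCount ω (σ c) := by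
    intro ω c
    simp only [letterCount, Function.comp]
    congr 1
    ext k
    simp only [Finset.mem_filter, Finset.mem_univ, true_and]
    rw [← Equiv.eq_symm_apply, Equiv.symm_swap]
  unfold beatenWeight
  rw [← ((Equiv.refl (Fin n)).arrowCongr σ).sum_comp]
  refine Finset.sum_congr rfl fun ω _ => ?_
  have hex : (∃ c, letterCount (σ ∘ ω) i < letterCount (σ ∘ ω) c) ↔
      ∃ c, letterCount ω j < letterCount ω c := by
    simp only [hσ]
    rw [Equiv.swap_apply_left]
    exact σ.exists_congr_left.trans (by simp [σ])
  change (if ∃ c, letterCount (σ ∘ ω) i < letterCount (σ ∘ ω) c then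
    wordWeight x z i (σ ∘ ω) else 0) = _
  rw [if_congr hex rfl rfl, wordWeight_eq, wordWeight_eq, hσ, Equiv.swap_apply_left]

/-- Averaging over the distinguished letter, only a letter of maximal weight escapes. -/
lemma card_mul_beatenWeight_le [Nonempty α] (hz : 0 ≤ z) (hzx : z ≤ x) (j : α)
    (u : (Fin n → α) → ℝ)
    (hu : ∀ (ω : Fin n → α) (i : α), (∀ k, wordWeight x z k ω ≤ wordWeight x z i ω) →
      (∑ k, wordWeight x z k ω) - wordWeight x z i ω ≤ u ω) :
    Fintype.card α * beatenWeight n x z j ≤ ∑ ω, u ω := by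
  classical
  have h : Fintype.card α * beatenWeight n x z j = ∑ i : α, beatenWeight n x z i := by
    rw [Finset.sum_congr rfl fun i _ => beatenWeight_eq i j]
    simp
  rw [h]
  unfold beatenWeight
  rw [Finset.sum_comm]
  refine Finset.sum_le_sum fun ω _ => ?_
  obtain ⟨i, hi⟩ := Finite.exists_max (letterCount ω)
  refine le_trans ?_ (hu ω i fun k => wordWeight_le_wordWeight hz hzx (hi k))
  rw [← Finset.sum_erase_eq_sub (Finset.mem_univ i),
    ← Finset.sum_erase (a := i) Finset.univ (by
      rw [if_neg]; push Not; exact hi)]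
  refine Finset.sum_le_sum fun k _ => ?_
  split_ifs
  exacts [le_rfl, wordWeight_nonneg (hz.trans hzx) hz k ω]

lemma sum_letter_weight (j : α) :
    ∑ a : α, (if a = j then x else z) = x + (Fintype.card α - 1) * z := by
  have : ∀ a : α, (if a = j then x else z) = z + if a = j then x - z else 0 := by
    intro a; split_ifs <;> ring
  simp only [this, Finset.sum_add_distrib, Finset.sum_const, Finset.card_univ,
    Finset.sum_ite_eq', Finset.mem_univ, if_true, nsmul_eq_mul]
  ring

lemma sum_wordWeight (j : α) :
    ∑ ω : Fin n → α, wordWeight x z j ω = (x + (Fintype.card α - 1) * z) ^ n := by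
  rw [← sum_letter_weight j, Fintype.sum_pow]
  rfl

lemma sum_wordWeight_mul_wordWeight {i j : α} (hij : i ≠ j) :
    ∑ ω : Fin n → α, wordWeight x z i ω * wordWeight x z j ω =
      (2 * x * z + (Fintype.card α - 2) * z ^ 2) ^ n := by
  have h : ∑ a : α, (if a = i then x else z) * (if a = j then x else z) =
      2 * x * z + (Fintype.card α - 2) * z ^ 2 := by
    have : ∀ a : α, (if a = i then x else z) * (if a = j then x else z) =
        z ^ 2 + (if a = i then x * z - z ^ 2 else 0) + (if a = j then x * z - z ^ 2 else 0) := by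
      intro a
      split_ifs with h1 h2
      · exact absurd (h1.symm.trans h2) hij
      all_goals ring
    simp only [this, Finset.sum_add_distrib, Finset.sum_const, Finset.card_univ,
      Finset.sum_ite_eq', Finset.mem_univ, if_true, nsmul_eq_mul]
    ring
  rw [← h, Fintype.sum_pow]
  simp only [wordWeight, Finset.prod_mul_distrib]

lemma beatenWeight_succ_le [Nonempty α] (hz : 0 ≤ z) (hzx : z ≤ x) (j : α) :
    beatenWeight (n + 1) x z j ≤
      (Fintype.card α - 1) * z * (x + (Fintype.card α - 1) * z) ^ n := by
  have hd : (0 : ℝ) < Fintype.card α := by exact_mod_cast Fintype.card_pos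
  refine le_of_mul_le_mul_left ?_ hd
  refine (card_mul_beatenWeight_le hz hzx j
    (fun ω => ∑ k, wordWeight x z k ω - wordWeight x z (ω 0) ω)
    fun ω i hi => sub_le_sub_left (hi _) _).trans (le_of_eq ?_)
  rw [Finset.sum_sub_distrib, Finset.sum_comm]
  simp only [sum_wordWeight, Finset.sum_const, Finset.card_univ, nsmul_eq_mul]
  rw [sum_words_insertNth 0]
  simp only [wordWeight_insertNth, Fin.insertNth_apply_same, if_true, ← Finset.mul_sum,
    sum_wordWeight, Finset.sum_const, Finset.card_univ, nsmul_eq_mul]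
  ring

/-- A quadratic form dominating the square of the mass outside a maximal coordinate. -/
lemma sq_sum_sub_le_sum_mul {v : α → ℝ} (hv : ∀ i, 0 ≤ v i) (a : α) {i : α}
    (hi : ∀ k, v k ≤ v i) :
    ((∑ k, v k) - v i) ^ 2 ≤ ∑ k ∈ Finset.univ.erase a, v k * ((∑ l, v l) - v k) := by
  have hle : v i ≤ ∑ k, v k := Finset.single_le_sum (fun k _ => hv k) (Finset.mem_univ i)
  calc ((∑ k, v k) - v i) ^ 2 ≤ ((∑ k, v k) - v a) * ((∑ k, v k) - v i) := by
        rw [sq]; gcongr; exact hi a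
    _ = ∑ k ∈ Finset.univ.erase a, v k * ((∑ l, v l) - v i) := by
        rw [← Finset.sum_mul, Finset.sum_erase_eq_sub (Finset.mem_univ a)]
    _ ≤ _ := Finset.sum_le_sum fun k _ => by gcongr; exacts [hv k, hi k]

lemma sq_beatenWeight_succ_le [Nonempty α] (hz : 0 ≤ z) (hzx : z ≤ x) (j : α) :
    beatenWeight (n + 1) x z j ^ 2 ≤
      (Fintype.card α - 1) * z * (x + (Fintype.card α - 2) * z) *
        (Fintype.card α * (2 * x * z + (Fintype.card α - 2) * z ^ 2)) ^ n := by
  have hx := hz.trans hzx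
  set d : ℝ := (Fintype.card α : ℝ) with hd_def
  have hd : 0 < d := by rw [hd_def]; exact_mod_cast Fintype.card_pos
  let B : (Fin (n + 1) → α) → ℝ := fun ω => ∑ k ∈ Finset.univ.erase (ω 0),
    wordWeight x z k ω * ((∑ l, wordWeight x z l ω) - wordWeight x z k ω)
  have hB0 : ∀ ω, 0 ≤ B ω := fun ω => Finset.sum_nonneg fun k _ =>
    mul_nonneg (wordWeight_nonneg hx hz k ω) (sub_nonneg.2
      (Finset.single_le_sum (f := fun l => wordWeight x z l ω)
        (fun l _ => wordWeight_nonneg hx hz l ω) (Finset.mem_univ k)))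
  have hle := card_mul_beatenWeight_le hz hzx j (fun ω => √(B ω)) fun ω i hi =>
    Real.le_sqrt_of_sq_le (sq_sum_sub_le_sum_mul (fun k => wordWeight_nonneg hx hz k ω) (ω 0) hi)
  have hsumB : ∑ ω, B ω = d * ((d - 1) * z * (x + (d - 2) * z)) *
      (2 * x * z + (d - 2) * z ^ 2) ^ n := by
    rw [sum_words_insertNth 0]
    have hin : ∀ a : α, ∑ ω : Fin n → α, B (Fin.insertNth 0 a ω) =
        ((d - 1) * z * (x + (d - 2) * z)) * (2 * x * z + (d - 2) * z ^ 2) ^ n := by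
      intro a
      have hw : ∀ k : α, ∀ ω : Fin (n + 1) → α,
          wordWeight x z k ω * ((∑ l, wordWeight x z l ω) - wordWeight x z k ω) =
          ∑ l ∈ Finset.univ.erase k, wordWeight x z k ω * wordWeight x z l ω := by
        intro k ω
        rw [← Finset.mul_sum, Finset.sum_erase_eq_sub (Finset.mem_univ k)]
      simp only [B, hw, Fin.insertNth_apply_same]
      rw [Finset.sum_comm]
      have hk : ∀ k ∈ Finset.univ.erase a, ∑ ω : Fin n → α, ∑ l ∈ Finset.univ.erase k,
          wordWeight x z k (Fin.insertNth 0 a ω : Fin (n + 1) → α) *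
            wordWeight x z l (Fin.insertNth 0 a ω : Fin (n + 1) → α) =
          z * (x + (d - 2) * z) * (2 * x * z + (d - 2) * z ^ 2) ^ n := by
        intro k hk
        have hka : a ≠ k := (Finset.ne_of_mem_erase hk).symm
        rw [Finset.sum_comm]
        have hl : ∀ l ∈ Finset.univ.erase k, ∑ ω : Fin n → α,
            wordWeight x z k (Fin.insertNth 0 a ω : Fin (n + 1) → α) *
              wordWeight x z l (Fin.insertNth 0 a ω : Fin (n + 1) → α) =
            z * (if a = l then x else z) * (2 * x * z + (d - 2) * z ^ 2) ^ n := by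
          intro l hl
          rw [← sum_wordWeight_mul_wordWeight (Finset.ne_of_mem_erase hl).symm, Finset.mul_sum]
          refine Finset.sum_congr rfl fun ω _ => ?_
          rw [wordWeight_insertNth, wordWeight_insertNth, if_neg hka]
          ring
        rw [Finset.sum_congr rfl hl, ← Finset.sum_mul, ← Finset.mul_sum,
          Finset.sum_erase_eq_sub (Finset.mem_univ k), if_neg hka]
        have := sum_letter_weight (x := x) (z := z) a
        simp only [eq_comm (b := a)] at this
        rw [this]
        ring
      rw [Finset.sum_congr rfl hk, Finset.sum_const, Finset.card_erase_of_mem (Finset.mem_univ a),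
        Finset.card_univ, nsmul_eq_mul, Nat.cast_pred Fintype.card_pos]
      ring
    simp only [hin, Finset.sum_const, Finset.card_univ, nsmul_eq_mul]
    ring
  have hcs := sq_sum_le_card_mul_sum_sq (s := Finset.univ) (f := fun ω => √(B ω))
  simp only [Real.sq_sqrt (hB0 _)] at hcs
  rw [hsumB, Finset.card_univ, Fintype.card_fun, Fintype.card_fin] at hcs
  push_cast at hcs
  have hsq := pow_le_pow_left₀ (mul_nonneg hd.le (beatenWeight_nonneg (n := n + 1) hx hz j)) hle 2
  refine le_of_mul_le_mul_left ?_ (show 0 < d ^ 2 by positivity)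
  rw [← mul_pow]
  refine (hsq.trans hcs).trans (le_of_eq ?_)
  rw [mul_pow]
  ring

lemma nonPluralityWeight_le_pow (hx : 0 ≤ x) (hz : 0 ≤ z) (j : α) :
    nonPluralityWeight n x z j ≤ (x + (Fintype.card α - 1) * z) ^ n := by
  rw [← sum_wordWeight j]
  refine Finset.sum_le_sum fun ω _ => ?_
  split_ifs
  exacts [wordWeight_nonneg hx hz j ω, le_rfl]

lemma hasDerivAt_nonPluralityWeight (j : α) :
    HasDerivAt (fun x => nonPluralityWeight (n + 1) x z j)
      ((n + 1) * beatenWeight n x z j) x := by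
  classical
  unfold nonPluralityWeight
  have h : ∀ ω ∈ (Finset.univ : Finset (Fin (n + 1) → α)), HasDerivAt
      (fun x => if ∀ c, c ≠ j → letterCount ω c < letterCount ω j then 0 else wordWeight x z j ω)
      (∑ i, if ∀ c, c ≠ j → letterCount ω c < letterCount ω j then 0 else
        if ω i = j then wordWeight x z j (i.removeNth ω) else 0) x := by
    intro ω _
    split_ifs
    · simpa using hasDerivAt_const x (0 : ℝ)
    · exact hasDerivAt_wordWeight j ω
  refine (HasDerivAt.fun_sum h).congr_deriv ?_
  rw [Finset.sum_comm]
  have hi : ∀ i : Fin (n + 1), (∑ ω : Fin (n + 1) → α,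
      if ∀ c, c ≠ j → letterCount ω c < letterCount ω j then 0 else
        if ω i = j then wordWeight x z j (i.removeNth ω) else 0) = beatenWeight n x z j := by
    intro i
    rw [sum_words_insertNth i, Finset.sum_eq_single j]
    · refine Finset.sum_congr rfl fun ω _ => ?_
      rw [if_congr (plurality_insertNth_iff i j ω) rfl rfl]
      simp only [ite_not, Fin.insertNth_apply_same, if_true, Fin.removeNth_insertNth]
    · intro a _ ha
      simp [ha]
    · simp
  simp [hi]

lemma beatenWeight_le (hz : 0 < z) (hzx : z ≤ x) (j : α) {Z w : ℝ}
    (hZ : Z = x + (Fintype.card α - 1) * z) (hw : w = x - z) :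
    beatenWeight n x z j ≤ (Z - w ^ 2 / (3 * Z)) ^ n *
      (1 - 2 * w / (3 * Z) + w ^ 2 / (3 * Z ^ 2)) := by
  have : Nonempty α := ⟨j⟩
  set d : ℝ := (Fintype.card α : ℝ) with hd_def
  have hd : 1 ≤ d := by rw [hd_def]; exact_mod_cast (Fintype.card_pos : 0 < Fintype.card α)
  have hwZ : Z = w + d * z := by rw [hZ, hw]; ring
  have hw0 : 0 ≤ w := by linarith
  have hdz : 0 < d * z := by positivity
  have hZ0 : 0 < Z := by linarith
  have hδ0 : 0 ≤ w / Z := by positivity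
  have hδ1 : w / Z ≤ 1 := (div_le_one hZ0).2 (by linarith)
  have hbase : Z - w ^ 2 / (3 * Z) = Z * (1 - (w / Z) ^ 2 / 3) := by field_simp
  have hfac : 1 - 2 * w / (3 * Z) + w ^ 2 / (3 * Z ^ 2) =
      1 - 2 * (w / Z) / 3 + (w / Z) ^ 2 / 3 := by field_simp
  rw [hbase, hfac]
  cases n with
  | zero =>
    have : beatenWeight 0 x z j = 0 := by simp [beatenWeight, letterCount]
    rw [this]
    nlinarith [sq_nonneg (w / Z - 1)]
  | succ k =>
    rw [mul_pow, mul_assoc, ← div_le_iff₀' (by positivity)]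
    have h1Z : 1 - w / Z = d * z / Z := by field_simp; linarith
    have h2Z : 1 - (w / Z) ^ 2 = (Z ^ 2 - w ^ 2) / Z ^ 2 := by field_simp
    refine le_one_sub_sq_div_three_pow_mul k hδ0 hδ1 ?_ ?_
    · rw [h1Z, div_le_div_iff₀ (by positivity) hZ0]
      have h := beatenWeight_succ_le (n := k) hz.le hzx j
      rw [← hd_def, ← hZ] at h
      calc beatenWeight (k + 1) x z j * Z ≤ (d * z * Z ^ k) * Z := by
            gcongr
            exact h.trans (by gcongr; linarith)
        _ = _ := by ring
    · have h := sq_beatenWeight_succ_le (n := k) hz.le hzx j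
      rw [← hd_def] at h
      have hκ : d * (2 * x * z + (d - 2) * z ^ 2) = Z ^ 2 - w ^ 2 := by rw [hZ, hw]; ring
      have hκ0 : 0 ≤ Z ^ 2 - w ^ 2 := by
        have := pow_le_pow_left₀ hw0 (show w ≤ Z by linarith) 2
        linarith
      rw [hκ] at h
      rw [h1Z, h2Z, div_pow, div_pow, div_mul_div_comm, div_le_div_iff₀ (by positivity)
        (by positivity)]
      calc beatenWeight (k + 1) x z j ^ 2 * (Z * (Z ^ 2) ^ k)
          ≤ ((d * z) * Z * (Z ^ 2 - w ^ 2) ^ k) * (Z * (Z ^ 2) ^ k) := by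
            refine mul_le_mul_of_nonneg_right (h.trans ?_) (by positivity)
            refine mul_le_mul_of_nonneg_right ?_ (by positivity)
            calc (d - 1) * z * (x + (d - 2) * z) ≤ (d - 1) * z * Z := by
                  refine mul_le_mul_of_nonneg_left (by rw [hZ]; nlinarith) ?_
                  exact mul_nonneg (by linarith) hz.le
              _ ≤ d * z * Z := by gcongr; linarith
        _ = _ := by ring

lemma nonPluralityWeight_le (hz : 0 < z) (hzx : z ≤ x) (j : α) :
    nonPluralityWeight n x z j ≤ (x + (Fintype.card α - 1) * z -
      (x - z) ^ 2 / (3 * (x + (Fintype.card α - 1) * z))) ^ n := by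
  have : Nonempty α := ⟨j⟩
  cases n with
  | zero => simpa using nonPluralityWeight_le_pow (n := 0) (hz.le.trans hzx) hz.le j
  | succ n =>
  have hd : (1 : ℝ) ≤ Fintype.card α := by
    exact_mod_cast (Fintype.card_pos : 0 < Fintype.card α)
  let Z : ℝ → ℝ := fun y => y + (Fintype.card α - 1) * z
  let T : ℝ → ℝ := fun y => Z y - (y - z) ^ 2 / (3 * Z y)
  have hZ : ∀ y, z ≤ y → 0 < Z y := fun y hy => by
    have : 0 ≤ (Fintype.card α - 1) * z := mul_nonneg (by linarith) hz.le
    simp only [Z]; linarith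
  have hT : ∀ y, z ≤ y → HasDerivAt T
      (1 - 2 * (y - z) / (3 * Z y) + (y - z) ^ 2 / (3 * Z y ^ 2)) y := by
    intro y hy
    have hZy := (hZ y hy).ne'
    have hdZ : HasDerivAt Z 1 y := (hasDerivAt_id y).add_const _
    have hnum : HasDerivAt (fun y => (y - z) ^ 2) (2 * (y - z)) y := by
      simpa using ((hasDerivAt_id y).sub_const z).fun_pow 2
    refine (hdZ.sub (hnum.div (hdZ.const_mul 3) (by positivity))).congr_deriv ?_
    field_simp
    ring
  have hg : ∀ y, z ≤ y → HasDerivAt (fun y => T y ^ (n + 1) - nonPluralityWeight (n + 1) y z j)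
      ((n + 1) * (T y ^ n * (1 - 2 * (y - z) / (3 * Z y) + (y - z) ^ 2 / (3 * Z y ^ 2)) -
        beatenWeight n y z j)) y := by
    intro y hy
    refine (((hT y hy).pow (n + 1)).sub (hasDerivAt_nonPluralityWeight j)).congr_deriv ?_
    push_cast
    ring
  have hmono : MonotoneOn (fun y => T y ^ (n + 1) - nonPluralityWeight (n + 1) y z j)
      (Set.Ici z) := by
    refine monotoneOn_of_deriv_nonneg (convex_Ici z)
      (fun y hy => (hg y hy).continuousAt.continuousWithinAt)
      (fun y hy => (hg y (interior_subset hy)).differentiableAt.differentiableWithinAt)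
      fun y hy => ?_
    have hy' : z ≤ y := interior_subset hy
    rw [(hg y hy').deriv]
    exact mul_nonneg (by positivity) (sub_nonneg.2 (beatenWeight_le hz hy' j rfl rfl))
  have h := hmono (Set.mem_Ici.2 le_rfl) (Set.mem_Ici.2 hzx) hzx
  have h0 : nonPluralityWeight (n + 1) z z j ≤ T z ^ (n + 1) := by
    simpa [T, Z] using nonPluralityWeight_le_pow (n := n + 1) hz.le hz.le j
  exact sub_nonneg.1 ((sub_nonneg.2 h0).trans h)

lemma nonPluralityWeight_zero_right (hn : n ≠ 0) (j : α) :
    nonPluralityWeight n x 0 j = 0 := by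
  refine Finset.sum_eq_zero fun ω _ => ?_
  split_ifs with h
  · rfl
  · by_contra hne
    refine h fun c hc => ?_
    have hω : ∀ i, ω i = j := by
      intro i
      by_contra hi
      exact hne (Finset.prod_eq_zero (Finset.mem_univ i) (if_neg hi))
    simp [letterCount, hω, hc.symm, Nat.pos_of_ne_zero hn]

lemma nonPluralityWeight_le_one_sub_pow (hz : 0 ≤ z) (hzx : z ≤ x) (j : α)
    (hone : x + (Fintype.card α - 1) * z = 1) :
    nonPluralityWeight n x z j ≤ (1 - (x - z) ^ 2 / 3) ^ n := by
  rcases hz.eq_or_lt with rfl | hz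
  · obtain rfl : x = 1 := by simpa using hone
    rcases eq_or_ne n 0 with rfl | hn
    · simpa using nonPluralityWeight_le_pow (n := 0) zero_le_one le_rfl j
    · rw [nonPluralityWeight_zero_right hn]
      norm_num
  · simpa [hone] using nonPluralityWeight_le (n := n) hz hzx j

lemma sum_answered_le_of_sum_words_le {p a : ℝ} (hp0 : 0 ≤ p) (hp1 : p ≤ 1) {g : α → ℝ}
    (hg : ∑ c, g c = 1) (r : ℕ) (f : (α → ℕ) → ℝ) (K : ℝ)
    (hf : ∀ n, ∑ ω : Fin n → α, (∏ i, g (ω i)) * f (letterCount ω) ≤ K * (1 - a) ^ n) :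
    ∑ ω : Fin r → Bool × α,
      (∏ i, (if (ω i).1 then p else 1 - p) * g (ω i).2) * f (answeredCount ω) ≤
        K * (1 - p * a) ^ r := by
  induction r generalizing f K with
  | zero =>
    have h := hf 0
    simp only [Finset.univ_unique, Finset.sum_singleton, Finset.univ_eq_empty, Finset.prod_empty,
      one_mul, pow_zero, mul_one] at h ⊢
    have h0 : answeredCount (default : Fin 0 → Bool × α) = letterCount (default : Fin 0 → α) := by
      funext c
      simp [answeredCount, letterCount]
    rwa [h0]
  | succ r ih =>
    have hshift := ih (fun N => ∑ c, g c * f (fun c' => (if c = c' then 1 else 0) + N c'))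
      (K * (1 - a)) fun n => by
        have h := hf (n + 1)
        rw [sum_words_insertNth 0] at h
        have hcount : ∀ (b : α) (ω : Fin n → α),
            letterCount (Fin.insertNth 0 b ω : Fin (n + 1) → α) =
              fun c => (if b = c then 1 else 0) + letterCount ω c :=
          fun b ω => funext (letterCount_insertNth 0 b ω)
        simp only [hcount, Fin.prod_univ_succAbove _ (0 : Fin (n + 1)),
          Fin.insertNth_apply_same, Fin.insertNth_apply_succAbove] at h
        simp only [Finset.mul_sum]
        rw [Finset.sum_comm, mul_assoc, ← pow_succ']
        refine le_trans (le_of_eq ?_) h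
        refine Finset.sum_congr rfl fun b _ => Finset.sum_congr rfl fun ω _ => ?_
        ring
    have hstay := ih f K hf
    rw [sum_words_insertNth 0]
    simp only [answeredCount_insertNth, Fin.prod_univ_succAbove _ (0 : Fin (r + 1)),
      Fin.insertNth_apply_same, Fin.insertNth_apply_succAbove, Fintype.sum_prod_type,
      Fintype.sum_bool, if_true, true_and, Bool.false_eq_true, if_false, false_and, zero_add]
    simp only [Finset.mul_sum] at hshift
    rw [Finset.sum_comm] at hshift
    set E := ∑ ω : Fin r → Bool × α,
      (∏ i, (if (ω i).1 then p else 1 - p) * g (ω i).2) * f (answeredCount ω)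
    have hfalse : ∀ b : α, ∑ ω : Fin r → Bool × α, (1 - p) * g b *
        (∏ i, (if (ω i).1 then p else 1 - p) * g (ω i).2) * f (answeredCount ω) =
        g b * ((1 - p) * E) := by
      intro b
      simp only [E, Finset.mul_sum]
      exact Finset.sum_congr rfl fun ω _ => by ring
    simp only [hfalse, ← Finset.sum_mul, hg, one_mul]
    calc _ ≤ p * (K * (1 - a) * (1 - p * a) ^ r) + (1 - p) * (K * (1 - p * a) ^ r) := by
          refine add_le_add ?_ (mul_le_mul_of_nonneg_left hstay (by linarith))
          refine le_trans (le_of_eq ?_) (mul_le_mul_of_nonneg_left hshift hp0)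
          simp only [Finset.mul_sum]
          refine Finset.sum_congr rfl fun b _ => Finset.sum_congr rfl fun ω _ => ?_
          ring
      _ = _ := by ring

end

/-- Plurality bound for direction answers (core of Lemma 5): with `r` i.i.d. rounds, each
producing a Bernoulli(p) indicator `B` and an independent direction `D ∈ {0,…,d-1}` with
`P(D = 0) = q` and `P(D = j) = (1-q)/(d-1)` for `j ≠ 0`, the true parent (category 0)
receives a strict plurality of designations among rounds with `B = 1` with probability at
least `1 - exp(-r·p·(d-1)·(q - 1/d)²/(3d))`. -/
theorem direction_plurality_bound (d r : ℕ) [NeZero d] (hd : 3 ≤ d) (hr : 1 ≤ r)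
    (p q : ℝ) (hp : 1 / 2 < p) (hp1 : p ≤ 1) (hq : 1 / (d : ℝ) < q) (hq1 : q ≤ 1)
    (ν : Measure (Bool × Fin d)) [IsProbabilityMeasure ν]
    (hν : ∀ (b : Bool) (j : Fin d),
      ν {(b, j)} = ENNReal.ofReal
        ((if b then p else 1 - p) * (if j = 0 then q else (1 - q) / ((d : ℝ) - 1)))) :
    (Measure.pi fun _ : Fin r => ν)
        {ω | ∀ c : Fin d, c ≠ 0 →
          (Finset.univ.filter fun i : Fin r => (ω i).1 = true ∧ (ω i).2 = c).card <
          (Finset.univ.filter fun i : Fin r => (ω i).1 = true ∧ (ω i).2 = 0).card} ≥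
      ENNReal.ofReal
        (1 - Real.exp (-((r : ℝ) * p * ((d : ℝ) - 1) * (q - 1 / (d : ℝ)) ^ 2) / (3 * d))) := by
  classical
  have hd3 : (3 : ℝ) ≤ d := by exact_mod_cast hd
  set s : ℝ := (1 - q) / ((d : ℝ) - 1) with hs_def
  have hs : ((d : ℝ) - 1) * s = 1 - q := mul_div_cancel₀ _ (by linarith)
  have hs0 : 0 ≤ s := div_nonneg (by linarith) (by linarith)
  have hdq : 1 < d * q := by rwa [div_lt_iff₀' (by linarith)] at hq
  have hsq : s ≤ q := by
    rw [hs_def, div_le_iff₀ (by linarith)]; nlinarith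
  set a : ℝ := (q - s) ^ 2 / 3 with ha_def
  let g : Fin d → ℝ := fun j => if j = 0 then q else s
  let W : (Fin r → Bool × Fin d) → ℝ := fun ω =>
    ∏ i, (if (ω i).1 then p else 1 - p) * g (ω i).2
  have hg0 : ∀ j, 0 ≤ g j := fun j => by
    simp only [g]; split_ifs
    exacts [hs0.trans hsq, hs0]
  have hW0 : ∀ ω, 0 ≤ W ω := fun ω => Finset.prod_nonneg fun i _ =>
    mul_nonneg (by split_ifs <;> linarith) (hg0 _)
  have hg1 : ∑ j, g j = 1 := by
    have := sum_letter_weight (x := q) (z := s) (0 : Fin d)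
    rw [Fintype.card_fin, hs] at this
    linarith
  set A : Set (Fin r → Bool × Fin d) :=
    {ω | ∀ c : Fin d, c ≠ 0 → answeredCount ω c < answeredCount ω 0} with hA
  set μ := Measure.pi fun _ : Fin r => ν
  have hμ : ∀ S : Set (Fin r → Bool × Fin d),
      μ S = ENNReal.ofReal (∑ ω, if ω ∈ S then W ω else 0) := by
    intro S
    rw [ENNReal.ofReal_sum_of_nonneg fun ω _ => by split_ifs; exacts [hW0 ω, le_rfl]]
    have hsing : ∀ ω : Fin r → Bool × Fin d, μ {ω} = ENNReal.ofReal (W ω) := by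
      intro ω
      rw [Measure.pi_singleton, ENNReal.ofReal_prod_of_nonneg fun i _ =>
        mul_nonneg (by split_ifs <;> linarith) (hg0 _)]
      exact Finset.prod_congr rfl fun i _ => hν _ _
    have hS : S = ↑(Finset.univ.filter (· ∈ S)) := by simp
    conv_lhs => rw [hS, ← sum_measure_singleton, Finset.sum_filter]
    refine Finset.sum_congr rfl fun ω _ => ?_
    split_ifs
    exacts [hsing ω, ENNReal.ofReal_zero.symm]
  have hfail : ∑ ω, (if ω ∈ Aᶜ then W ω else 0) ≤ (1 - p * a) ^ r := by
    have h := sum_answered_le_of_sum_words_le (a := a) (by linarith) hp1 hg1 r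
      (fun N => if ∀ c, c ≠ 0 → N c < N 0 then 0 else 1) 1 fun n => by
        have h := nonPluralityWeight_le_one_sub_pow (n := n) hs0 hsq (0 : Fin d)
          (by rw [Fintype.card_fin, hs]; ring)
        rw [one_mul]
        refine le_trans (le_of_eq (Finset.sum_congr rfl fun ω _ => ?_)) h
        simp only [mul_ite, mul_zero, mul_one]
        congr
    rw [one_mul] at h
    refine le_trans (le_of_eq (Finset.sum_congr rfl fun ω _ => ?_)) h
    simp only [hA, Set.mem_compl_iff, Set.mem_ofPred_eq, ite_not, mul_ite, mul_zero, mul_one]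
    rfl
  have hexp : (1 - p * a) ^ r ≤
      Real.exp (-((r : ℝ) * p * ((d : ℝ) - 1) * (q - 1 / (d : ℝ)) ^ 2) / (3 * d)) := by
    have hpa : p * a ≤ 1 := by
      have : q - s ≤ 1 := by linarith
      rw [ha_def]
      nlinarith
    calc (1 - p * a) ^ r ≤ Real.exp (-(p * a)) ^ r := by
          exact pow_le_pow_left₀ (by linarith) (Real.one_sub_le_exp_neg _) r
      _ = Real.exp (r * -(p * a)) := (Real.exp_nat_mul _ _).symm
      _ ≤ _ := by
        rw [Real.exp_le_exp]
        have hε : q - 1 / (d : ℝ) = (d - 1) / d * (q - s) := by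
          field_simp
          linear_combination hs
        have hfrac : ((d : ℝ) - 1) / d ≤ 1 := (div_le_one (by linarith)).2 (by linarith)
        have hfrac0 : 0 ≤ ((d : ℝ) - 1) / d := div_nonneg (by linarith) (by linarith)
        have hcube := pow_le_one₀ (n := 3) hfrac0 hfrac
        have hrpa : 0 ≤ r * p * a := by positivity
        have : -((r : ℝ) * p * ((d : ℝ) - 1) * (q - 1 / (d : ℝ)) ^ 2) / (3 * d) =
            -(((d - 1) / d) ^ 3 * (r * p * a)) := by
          rw [hε, ha_def]; ring
        rw [this]
        nlinarith
  have hAc : μ Aᶜ ≤ ENNReal.ofReal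
      (Real.exp (-((r : ℝ) * p * ((d : ℝ) - 1) * (q - 1 / (d : ℝ)) ^ 2) / (3 * d))) := by
    rw [hμ]
    refine ENNReal.ofReal_le_ofReal (le_trans (le_of_eq ?_) (hfail.trans hexp))
    exact Finset.sum_congr rfl fun ω _ => by congr
  change ENNReal.ofReal _ ≤ μ A
  rw [ENNReal.ofReal_sub _ (Real.exp_nonneg _), ENNReal.ofReal_one, tsub_le_iff_right]
  calc (1 : ENNReal) = μ A + μ Aᶜ := by
        rw [measure_add_measure_compl (Set.toFinite A).measurableSet, measure_univ]
    _ ≤ _ := by gcongr
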